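/- Let X be a Borel subset of the Cantor space 2^ω such that the subspace X is homogeneous and not locally compact. Then the Wadge class generated by X is non-self-dual; in particular, there is no continuous function f : 2^ω → 2^ω with f⁻¹[X] = 2^ω \ X. -/

import Mathlib

open Set

abbrev Cantor := ℕ → Bool

def UpwardClosed (S : Set Cantor) : Prop :=
  ∀ x ∈ S, ∀ y : Cantor, (∀ n, x n = true → y n = true) → y ∈ S

def DownwardClosed (R : Set Cantor) : Prop :=
  ∀ y ∈ R, ∀ x : Cantor, (∀ n, x n = true → y n = true) → x ∈ R

def ClosedUnderFinMod (S : Set Cantor) : Prop :=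
  ∀ x ∈ S, ∀ y : Cantor, {n | x n ≠ y n}.Finite → y ∈ S

def IsSemifilter (S : Set Cantor) : Prop :=
  (fun _ => false) ∉ S ∧ (fun _ => true) ∈ S ∧ UpwardClosed S ∧ ClosedUnderFinMod S

def IsSemiideal (R : Set Cantor) : Prop :=
  (fun _ => false) ∈ R ∧ (fun _ => true) ∉ R ∧ DownwardClosed R ∧ ClosedUnderFinMod R

def ClosedUnderInter (S : Set Cantor) : Prop :=
  ∀ x ∈ S, ∀ y ∈ S, (fun n => x n && y n) ∈ S

def IsFilterOnOmega (F : Set Cantor) : Prop := IsSemifilter F ∧ ClosedUnderInter F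

def IsHomogeneous (X : Type*) [TopologicalSpace X] : Prop :=
  ∀ x y : X, ∃ h : X ≃ₜ X, h x = y

def IsFsigma (A : Set Cantor) : Prop :=
  ∃ F : ℕ → Set Cantor, (∀ n, IsClosed (F n)) ∧ A = ⋃ n, F n

def DOmegaSigmaTwo (X : Set Cantor) : Prop :=
  ∃ A : ℕ → Set Cantor, (∀ n, IsFsigma (A n)) ∧ Monotone A ∧
    X = ⋃ n ∈ {n : ℕ | Odd n}, (A n \ ⋃ m < n, A m)

def InDelta (X : Set Cantor) : Prop := DOmegaSigmaTwo X ∧ DOmegaSigmaTwo Xᶜ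

def WadgeLe (A B : Set Cantor) : Prop :=
  ∃ f : Cantor → Cantor, Continuous f ∧ A = f ⁻¹' B

def WadgeEquiv (A B : Set Cantor) : Prop := WadgeLe A B ∧ WadgeLe B A

def CompletelyMetrizable (X : Type*) [t : TopologicalSpace X] : Prop :=
  ∃ m : MetricSpace X, m.toUniformSpace.toTopologicalSpace = t ∧
    @CompleteSpace X m.toUniformSpace

def FirstCategory (X : Type*) [TopologicalSpace X] : Prop :=
  ∃ f : ℕ → Set X, (∀ n, interior (closure (f n)) = ∅) ∧ (Set.univ : Set X) = ⋃ n, f n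

def CantorFin : Set Cantor := {x | {n | x n = true}.Finite}

def BorelSet (X : Set Cantor) : Prop := @MeasurableSet Cantor (borel Cantor) X
namespace WadgeHom
open Filter Topology

/-- A Borel subset of Cantor space cannot be a flip set. -/
theorem no_flip (A : Set Cantor) (hA : @MeasurableSet Cantor (borel Cantor) A)
    (hflip : ∀ (z : Cantor) (n : ℕ), (Function.update z n (!(z n)) ∈ A ↔ z ∉ A)) : False := by
  let _ : MeasurableSpace Cantor := borel Cantor
  have _ : BorelSpace Cantor := ⟨rfl⟩
  obtain ⟨O, hO, hAO⟩ := MeasurableSet.residualEq_isOpen hA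
  have hinv : ∀ n, Function.Involutive (fun z : Cantor => Function.update z n (!(z n))) := by
    intro n z
    funext i
    by_cases h : i = n
    · subst h; simp
    · simp [h]
  have hcont : ∀ n, Continuous (fun z : Cantor => Function.update z n (!(z n))) := by
    intro n
    refine Continuous.update continuous_id n ?_
    exact (continuous_of_discreteTopology (f := Bool.not)).comp (continuous_apply n)
  let e : ℕ → (Cantor ≃ₜ Cantor) := fun n =>
    { toEquiv := (hinv n).toPerm
      continuous_toFun := hcont n
      continuous_invFun := hcont n }
  have hmem : {z | z ∈ A ↔ z ∈ O} ∈ residual Cantor := by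
    filter_upwards [hAO] with z hz
    exact Iff.of_eq hz
  have hmem2 : ∀ n, {z | e n z ∈ A ↔ e n z ∈ O} ∈ residual Cantor := by
    intro n
    have := (Homeomorph.residual_map_eq (e n)).symm ▸ hmem
    exact this
  have key : ∀ n, {z | (z ∈ O ↔ e n z ∉ O)} ∈ residual Cantor := by
    intro n
    filter_upwards [hmem, hmem2 n] with z h1 h2
    have := hflip z n
    have h3 : e n z ∈ A ↔ z ∉ A := this
    change z ∈ O ↔ e n z ∉ O
    tauto
  by_cases hne : O.Nonempty
  · obtain ⟨x, hx⟩ := hne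
    obtain ⟨_, ⟨y, n, rfl⟩, hxy, hsub⟩ :=
      (PiNat.isTopologicalBasis_cylinders (fun _ : ℕ => Bool)).exists_subset_of_mem_open hx hO
    have hd := dense_of_mem_residual (key n)
    obtain ⟨w, hw, hw2⟩ := hd.exists_mem_open (PiNat.isOpen_cylinder _ y n) ⟨x, hxy⟩
    have h1 : w ∈ O := hsub hw2
    refine hw.1 h1 (hsub ?_)
    rw [PiNat.mem_cylinder_iff] at hw2 ⊢
    intro i hi
    change Function.update w n (!(w n)) i = y i
    rw [Function.update_of_ne (by omega)]
    exact hw2 i hi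
  · rw [Set.not_nonempty_iff_eq_empty] at hne
    obtain ⟨w, hw⟩ := (dense_of_mem_residual (key 0)).nonempty
    rw [hne] at hw
    simp at hw

theorem gdelta_inter_preimage {α β : Type*} [TopologicalSpace α] [TopologicalSpace β]
    {G : Set α} {g : α → β} {H : Set β} (hG : IsGδ G) (hg : ContinuousOn g G) (hH : IsGδ H) :
    IsGδ (G ∩ g ⁻¹' H) := by
  obtain ⟨O, hO, rfl⟩ := isGδ_iff_eq_iInter_nat.1 hH
  have : ∀ n, ∃ u, IsOpen u ∧ g ⁻¹' (O n) ∩ G = u ∩ G := fun n =>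
    continuousOn_iff'.1 hg (O n) (hO n)
  choose u hu huG using this
  have : G ∩ g ⁻¹' (⋂ n, O n) = G ∩ ⋂ n, u n := by
    ext x
    simp only [Set.mem_inter_iff, Set.mem_preimage, Set.mem_iInter]
    refine and_congr_right fun hx => forall_congr' fun n => ?_
    have := Set.ext_iff.1 (huG n) x
    simpa [hx] using this
  rw [this]
  exact hG.inter (IsGδ.iInter_of_isOpen hu)

theorem isClosed_gdelta {α : Type*} [TopologicalSpace α] [TopologicalSpace.MetrizableSpace α] {C : Set α}
    (hC : IsClosed C) : IsGδ C := by
  let _ := TopologicalSpace.metrizableSpaceMetric α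
  exact hC.isGδ

/-- Fσ sets (complement is Gδ). -/
def Fs (A : Set Cantor) : Prop := IsGδ Aᶜ

theorem Fs.of_closed {A : Set Cantor} (h : IsClosed A) : Fs A := h.isOpen_compl.isGδ

theorem Fs.of_open {A : Set Cantor} (h : IsOpen A) : Fs A := isClosed_gdelta h.isClosed_compl

theorem Fs.iUnion {ι : Type*} [Countable ι] {A : ι → Set Cantor} (h : ∀ i, Fs (A i)) :
    Fs (⋃ i, A i) := by
  unfold Fs
  rw [Set.compl_iUnion]
  exact IsGδ.iInter h

theorem Fs.inter {A B : Set Cantor} (h : Fs A) (h' : Fs B) : Fs (A ∩ B) := by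
  unfold Fs
  rw [Set.compl_inter]
  exact IsGδ.union h h'

theorem Fs.exists_closed {A : Set Cantor} (h : Fs A) :
    ∃ F : ℕ → Set Cantor, (∀ n, IsClosed (F n)) ∧ A = ⋃ n, F n := by
  obtain ⟨O, hO, hA⟩ := isGδ_iff_eq_iInter_nat.1 h
  refine ⟨fun n => (O n)ᶜ, fun n => (hO n).isClosed_compl, ?_⟩
  rw [← Set.compl_iInter, ← hA, compl_compl]

/-- one-sided extension -/
theorem extend_gdelta (X : Set Cantor) (f : Cantor → Cantor) (hf : ContinuousOn f X) :
    ∃ (G : Set Cantor) (g : Cantor → Cantor), IsGδ G ∧ X ⊆ G ∧ ContinuousOn g G ∧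
      ∀ x ∈ X, g x = f x := by
  let P : ℕ → Set Cantor := fun n => {x | ∃ b, ∀ᶠ y in 𝓝[X] x, f y n = b}
  have hP : ∀ n, IsOpen (P n) := by
    intro n
    have : P n = ⋃ b, {x | ∀ᶠ y in 𝓝[X] x, f y n = b} := by
      ext x; simp [P]
    rw [this]
    refine isOpen_iUnion fun b => ?_
    simp only [eventually_nhdsWithin_iff]
    exact isOpen_setOfPred_eventually_nhds
  let G := closure X ∩ ⋂ n, P n
  have hconv : ∀ x ∈ G, ∃ y, Tendsto f (𝓝[X] x) (𝓝 y) := by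
    intro x hx
    have hx2 : ∀ n, ∃ b, ∀ᶠ y in 𝓝[X] x, f y n = b := fun n => Set.mem_iInter.1 hx.2 n
    choose b hb using hx2
    refine ⟨b, ?_⟩
    rw [tendsto_pi_nhds]
    intro n
    exact tendsto_nhds_of_eventually_eq (hb n)
  refine ⟨G, extendFrom X f, (isClosed_gdelta isClosed_closure).inter (IsGδ.iInter_of_isOpen hP),
    ?_, continuousOn_extendFrom Set.inter_subset_left hconv, extendFrom_extends hf⟩
  intro x hx
  refine ⟨subset_closure hx, Set.mem_iInter.2 fun n => ⟨f x n, ?_⟩⟩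
  have h1 : Tendsto (fun y => f y n) (𝓝[X] x) (𝓝 (f x n)) :=
    ((continuous_apply n).tendsto (f x)).comp (hf x hx)
  have h2 : {b : Bool | b = f x n} ∈ 𝓝 (f x n) := (isOpen_discrete _).mem_nhds rfl
  exact h1.eventually h2

/-- Lavrentiev-type extension of an autohomeomorphism. -/
theorem lavrentiev (X : Set Cantor) (h : X ≃ₜ X) :
    ∃ (G : Set Cantor) (g : Cantor → Cantor), IsGδ G ∧ X ⊆ G ∧ ContinuousOn g G ∧
      (∀ x : X, g x = h x) ∧ (∀ x ∈ G, (g x ∈ X ↔ x ∈ X)) ∧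
      (∀ K, IsCompact K → K ⊆ X → Fs (G ∩ g ⁻¹' K)) := by
  classical
  have aux : ∀ k : X ≃ₜ X, ∃ (G : Set Cantor) (g : Cantor → Cantor), IsGδ G ∧ X ⊆ G ∧
      ContinuousOn g G ∧ ∀ x : X, g x = k x := by
    intro k
    let f : Cantor → Cantor := fun x => if hx : x ∈ X then k ⟨x, hx⟩ else x
    have hf : ContinuousOn f X := by
      rw [continuousOn_iff_continuous_domRestrict]
      have : X.domRestrict f = fun x => (k x : Cantor) := by
        funext x; simp [f]
      rw [this]
      exact continuous_subtype_val.comp k.continuous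
    obtain ⟨G, g, h1, h2, h3, h4⟩ := extend_gdelta X f hf
    refine ⟨G, g, h1, h2, h3, fun x => ?_⟩
    rw [h4 x x.2]; simp [f]
  obtain ⟨G, g, hG, hXG, hgc, hgx⟩ := aux h
  obtain ⟨H, k, hH, hXH, hkc, hkx⟩ := aux h.symm
  have hG1 : IsGδ (G ∩ g ⁻¹' H) := gdelta_inter_preimage hG hgc hH
  have hc : ContinuousOn (fun x => (k (g x), x)) (G ∩ g ⁻¹' H) := by
    refine ContinuousOn.prodMk ?_ continuousOn_id
    exact hkc.comp (hgc.mono Set.inter_subset_left) (fun x hx => hx.2)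
  have hG2 := gdelta_inter_preimage hG1 hc (isClosed_gdelta (isClosed_diagonal (X := Cantor)))
  have hX2 : X ⊆ (G ∩ g ⁻¹' H) ∩ (fun x => (k (g x), x)) ⁻¹' Set.diagonal Cantor := by
    intro x hx
    refine ⟨⟨hXG hx, ?_⟩, ?_⟩
    · change g x ∈ H
      rw [hgx ⟨x, hx⟩]
      exact hXH (h ⟨x, hx⟩).2
    · change k (g x) = x
      rw [hgx ⟨x, hx⟩, hkx]
      simp
  have hback : ∀ x, x ∈ (G ∩ g ⁻¹' H) ∩ (fun x => (k (g x), x)) ⁻¹' Set.diagonal Cantor →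
      ∀ hx : g x ∈ X, x = h.symm ⟨g x, hx⟩ := by
    intro x hx hgX
    have : k (g x) = x := hx.2
    rw [← hkx]
    exact this.symm
  refine ⟨_, g, hG2, hX2, hgc.mono (fun x hx => hx.1.1), hgx, ?_, ?_⟩
  · intro x hx
    constructor
    · intro hgX
      rw [hback x hx hgX]
      exact (h.symm _).2
    · intro hxX
      rw [hgx ⟨x, hxX⟩]
      exact (h _).2
  · intro K hK hKX
    apply Fs.of_closed
    have hK' : IsCompact ((↑) ⁻¹' K : Set X) := by
      rw [Subtype.isCompact_iff, Subtype.image_preimage_coe, Set.inter_eq_right.2 hKX]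
      exact hK
    have h2 : IsCompact ((↑) '' (h.symm '' ((↑) ⁻¹' K : Set X)) : Set Cantor) :=
      (hK'.image h.symm.continuous).image continuous_subtype_val
    convert h2.isClosed using 1
    ext x
    constructor
    · rintro ⟨hx, hxK⟩
      refine ⟨_, ⟨⟨g x, hKX hxK⟩, hxK, rfl⟩, (hback x hx (hKX hxK)).symm⟩
    · rintro ⟨_, ⟨y, hy, rfl⟩, rfl⟩
      refine ⟨hX2 (h.symm y).2, ?_⟩
      change g (h.symm y) ∈ K
      rw [hgx]; simpa using hy

end WadgeHom
namespace WadgeHom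
open Filter Topology

theorem exists_clopen_nhd {x : Cantor} {O : Set Cantor} (hO : O ∈ 𝓝 x) :
    ∃ V, IsClopen V ∧ x ∈ V ∧ V ⊆ O := by
  obtain ⟨O', hsub, hO', hx⟩ := mem_nhds_iff.1 hO
  obtain ⟨V, hV, hxV, hVO⟩ := compact_exists_isClopen_in_isOpen hO' hx
  exact ⟨V, hV, hxV, hVO.trans hsub⟩

/-- Partial reduction of `X` to itself, from the Gδ set `G` into `S`. -/
structure PR (X G : Set Cantor) (g : Cantor → Cantor) (S : Set Cantor) : Prop where
  gd : IsGδ G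
  cont : ContinuousOn g G
  maps : ∀ x ∈ G, g x ∈ S
  iff : ∀ x ∈ G, (g x ∈ X ↔ x ∈ X)
  cpt : ∀ K, IsCompact K → K ⊆ X → Fs (G ∩ g ⁻¹' K)

theorem exists_PR (X : Set Cantor) (hhom : IsHomogeneous X) (U : Set Cantor) (hU : IsClopen U)
    (hne : (X ∩ U).Nonempty) : ∃ G g, X ⊆ G ∧ PR X G g U := by
  classical
  obtain ⟨u, huX, huU⟩ := hne
  have h1 : ∀ x : X, ∃ h : X ≃ₜ X, h x = ⟨u, huX⟩ := fun x => hhom x ⟨u, huX⟩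
  choose h hh using h1
  have h2 : ∀ x : X, ∃ (G : Set Cantor) (g : Cantor → Cantor), IsGδ G ∧ X ⊆ G ∧ ContinuousOn g G ∧
      (∀ y : X, g y = h x y) ∧ (∀ y ∈ G, (g y ∈ X ↔ y ∈ X)) ∧
      (∀ K, IsCompact K → K ⊆ X → Fs (G ∩ g ⁻¹' K)) := fun x => lavrentiev X (h x)
  choose G g hG hXG hgc hgx hgX hgK using h2
  have h3 : ∀ x : X, ∃ V, IsClopen V ∧ (x : Cantor) ∈ V ∧ ∀ y ∈ X, y ∈ V → g x y ∈ U := by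
    intro x
    have hgU : g x x ∈ U := by rw [hgx, hh]; exact huU
    have hc : ContinuousWithinAt (g x) X x := (hgc x x (hXG x x.2)).mono (hXG x)
    have := hc.eventually (hU.isOpen.mem_nhds hgU)
    rw [eventually_nhdsWithin_iff] at this
    obtain ⟨V, hV, hxV, hVO⟩ := exists_clopen_nhd this
    exact ⟨V, hV, hxV, fun y hy hyV => hVO hyV hy⟩
  choose V hV hxV hVU using h3
  obtain ⟨T, hT, hTV⟩ := TopologicalSpace.isOpen_iUnion_countable V (fun x => (hV x).isOpen)
  have hcov : ∀ y ∈ X, ∃ t ∈ T, y ∈ V t := by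
    intro y hy
    have : y ∈ ⋃ x, V x := Set.mem_iUnion.2 ⟨⟨y, hy⟩, hxV ⟨y, hy⟩⟩
    rw [← hTV] at this
    simpa using this
  have hTne : T.Nonempty := by
    obtain ⟨t, ht, _⟩ := hcov u huX
    exact ⟨t, ht⟩
  obtain ⟨i, hi⟩ := hT.exists_eq_range hTne
  let W : ℕ → Set Cantor := fun n => V (i n) \ ⋃ j ∈ Finset.range n, V (i j)
  have hW : ∀ n, IsClopen (W n) := by
    intro n
    refine (hV (i n)).diff ?_
    exact isClopen_biUnion_finset (fun j _ => hV (i j))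
  let k : Cantor → ℕ := fun x => sInf {n | x ∈ V (i n)}
  have hk : ∀ n x, x ∈ W n → k x = n := by
    intro n x hx
    apply le_antisymm (Nat.sInf_le hx.1)
    by_contra hlt
    push Not at hlt
    have h5 : k x ∈ {n | x ∈ V (i n)} := Nat.sInf_mem ⟨n, hx.1⟩
    apply hx.2
    simp only [Set.mem_iUnion]
    exact ⟨k x, Finset.mem_range.2 hlt, h5⟩
  have hk2 : ∀ x, (∃ n, x ∈ V (i n)) → x ∈ W (k x) := by
    intro x hx
    have h5 : k x ∈ {n | x ∈ V (i n)} := Nat.sInf_mem hx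
    refine ⟨h5, ?_⟩
    simp only [Set.mem_iUnion, not_exists]
    intro j hj hjV
    have : k x ≤ j := Nat.sInf_le hjV
    have := Finset.mem_range.1 hj
    omega
  let G' : ℕ → Set Cantor := fun n => G (i n) ∩ g (i n) ⁻¹' U
  have hG' : ∀ n, IsGδ (G' n) := fun n => gdelta_inter_preimage (hG _) (hgc _) hU.isOpen.isGδ
  let GG : Set Cantor := ⋃ n, W n ∩ G' n
  let gg : Cantor → Cantor := fun x => g (i (k x)) x
  have hgg : ∀ n x, x ∈ W n → gg x = g (i n) x := by
    intro n x hx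
    simp only [gg, hk n x hx]
  refine ⟨GG, gg, ?_, ?_, ?_, ?_, ?_, ?_⟩
  · intro x hx
    have hex : ∃ n, x ∈ V (i n) := by
      obtain ⟨t, ht, hxt⟩ := hcov x hx
      rw [hi] at ht
      obtain ⟨n, rfl⟩ := ht
      exact ⟨n, hxt⟩
    refine Set.mem_iUnion.2 ⟨k x, hk2 x hex, hXG _ hx, ?_⟩
    exact hVU _ x hx (hk2 x hex).1
  · have : GG = (⋃ n, W n) ∩ ⋂ n, ((W n)ᶜ ∪ G' n) := by
      ext x
      simp only [GG, Set.mem_iUnion, Set.mem_inter_iff, Set.mem_iInter, Set.mem_union,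
        Set.mem_compl_iff]
      constructor
      · rintro ⟨n, hn, hn'⟩
        refine ⟨⟨n, hn⟩, fun m => ?_⟩
        by_cases hm : x ∈ W m
        · right
          rw [← hk m x hm, hk n x hn]
          exact hn'
        · left; exact hm
      · rintro ⟨⟨n, hn⟩, h⟩
        exact ⟨n, hn, (h n).resolve_left (by simpa using hn)⟩
    rw [this]
    exact (isOpen_iUnion fun n => (hW n).isOpen).isGδ.inter
      (IsGδ.iInter fun n => (hW n).compl.isOpen.isGδ.union (hG' n))
  · intro x hx
    obtain ⟨n, hn, hn'⟩ := Set.mem_iUnion.1 hx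
    have hc : ContinuousWithinAt (g (i n)) (G (i n)) x := hgc _ x hn'.1
    have hWn : W n ∈ 𝓝 x := (hW n).isOpen.mem_nhds hn
    have hc2 : ContinuousWithinAt (g (i n)) (GG ∩ W n) x := by
      refine hc.mono ?_
      rintro y ⟨hy, hyW⟩
      obtain ⟨m, hm, hm'⟩ := Set.mem_iUnion.1 hy
      have : m = n := by rw [← hk m y hm, hk n y hyW]
      subst this
      exact hm'.1
    have hc3 : ContinuousWithinAt gg (GG ∩ W n) x :=
      hc2.congr (fun y hy => hgg n y hy.2) (hgg n x hn)
    exact (continuousWithinAt_inter hWn).1 hc3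
  · intro x hx
    obtain ⟨n, hn, hn'⟩ := Set.mem_iUnion.1 hx
    rw [hgg n x hn]
    exact hn'.2
  · intro x hx
    obtain ⟨n, hn, hn'⟩ := Set.mem_iUnion.1 hx
    rw [hgg n x hn]
    exact hgX _ x hn'.1
  · intro K hK hKX
    have : GG ∩ gg ⁻¹' K = ⋃ n, W n ∩ (G (i n) ∩ g (i n) ⁻¹' (K ∩ U)) := by
      ext x
      simp only [GG, Set.mem_iUnion, Set.mem_inter_iff, Set.mem_preimage]
      constructor
      · rintro ⟨⟨n, hn, hn'⟩, hxK⟩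
        rw [hgg n x hn] at hxK
        exact ⟨n, hn, hn'.1, hxK, hn'.2⟩
      · rintro ⟨n, hn, h1, h2, h3⟩
        refine ⟨⟨n, hn, h1, h3⟩, ?_⟩
        rw [hgg n x hn]
        exact h2
    rw [this]
    refine Fs.iUnion fun n => (Fs.of_closed (hW n).isClosed).inter ?_
    exact hgK _ _ (hK.inter_right hU.isClosed) (Set.inter_subset_left.trans hKX)

theorem not_lc (X : Set Cantor) (hhom : IsHomogeneous X) (hnlc : ¬ LocallyCompactSpace X)
    (U : Set Cantor) (hU : IsOpen U) (hne : (X ∩ U).Nonempty) (hsub : U ∩ closure X ⊆ X) :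
    False := by
  obtain ⟨u, huX, huU⟩ := hne
  obtain ⟨V, hV, huV, hVU⟩ := exists_clopen_nhd (hU.mem_nhds huU)
  have hc : IsCompact (V ∩ closure X) := (hV.isClosed.inter isClosed_closure).isCompact
  have hcX : V ∩ closure X ⊆ X := fun x hx => hsub ⟨hVU hx.1, hx.2⟩
  let K : Set X := (↑) ⁻¹' V
  have hK : IsCompact K := by
    rw [Subtype.isCompact_iff, Subtype.image_preimage_coe]
    convert hc using 1
    ext x
    constructor
    · rintro ⟨h1, h2⟩
      exact ⟨h2, subset_closure h1⟩
    · rintro ⟨h1, h2⟩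
      exact ⟨hcX ⟨h1, h2⟩, h1⟩
  have hKo : IsOpen K := hV.isOpen.preimage continuous_subtype_val
  have : WeaklyLocallyCompactSpace X := by
    refine ⟨fun x => ?_⟩
    obtain ⟨h, hx⟩ := hhom x ⟨u, huX⟩
    refine ⟨h ⁻¹' K, ?_, ?_⟩
    · rw [h.isCompact_preimage]; exact hK
    · refine (hKo.preimage h.continuous).mem_nhds ?_
      change h x ∈ K
      rw [hx]; exact huV
  exact hnlc inferInstance

/-- `X` has rank `n` on `S`, w.r.t. the difference hierarchy over Σ⁰₂. -/
def Rk (X : Set Cantor) (n c : ℕ) (S : Set Cantor) : Prop :=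
  ∃ r : Cantor → ℕ, (∀ i, Fs {x | r x ≤ i}) ∧ ∀ x ∈ S, r x < n ∧ (x ∈ X ↔ Even (r x + c))

theorem Rk.pull {X : Set Cantor} {n c : ℕ} {S : Set Cantor} (hS : IsClosed S) (h : Rk X n c S)
    (hn : 1 ≤ n) (hn2 : Even c → 2 ≤ n) {G : Set Cantor} {g : Cantor → Cantor}
    (hg : PR X G g S) {S' : Set Cantor} (hS' : X ∩ S' ⊆ G) : Rk X n c S' := by
  classical
  obtain ⟨r, hr, hrS⟩ := h
  let l : ℕ := if Even c then 1 else 0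
  have hl : l < n := by
    by_cases hc : Even c
    · have := hn2 hc
      simp only [l, if_pos hc]; omega
    · simp only [l, if_neg hc]; omega
  have hlc : ¬ Even (l + c) := by
    by_cases hc : Even c
    · simp only [l, if_pos hc]
      rw [Nat.even_add]; simp [hc]
    · simp only [l, if_neg hc]
      simpa using hc
  refine ⟨fun x => if x ∈ G then r (g x) else l, fun i => ?_, fun x hx => ?_⟩
  · by_cases hi : l ≤ i
    · have : {x | (if x ∈ G then r (g x) else l) ≤ i}ᶜ = G ∩ g ⁻¹' {x | r x ≤ i}ᶜ := by
        ext x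
        by_cases hx : x ∈ G
        · simp [hx]
        · simp [hx, hi]
      unfold Fs
      rw [this]
      exact gdelta_inter_preimage hg.gd hg.cont (hr i)
    · have hc : Even c := by
        by_contra hc
        simp only [l, if_neg hc] at hi
        omega
      have hl1 : l = 1 := by simp only [l, if_pos hc]
      have hi0 : i = 0 := by omega
      subst hi0
      obtain ⟨F, hF, hFr⟩ := Fs.exists_closed (hr 0)
      have hFX : ∀ j, F j ∩ S ⊆ X := by
        rintro j x ⟨hxF, hxS⟩
        have h0 : x ∈ {x | r x ≤ 0} := by rw [hFr]; exact Set.mem_iUnion.2 ⟨j, hxF⟩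
        have h0' : r x = 0 := by simpa using h0
        rw [(hrS x hxS).2, h0']
        simpa using hc
      have : {x | (if x ∈ G then r (g x) else l) ≤ 0} = ⋃ j, G ∩ g ⁻¹' (F j ∩ S) := by
        ext x
        have h0 : ∀ y, r y ≤ 0 ↔ ∃ j, y ∈ F j := by
          intro y
          have := Set.ext_iff.1 hFr y
          simpa using this
        by_cases hx : x ∈ G
        · have hm := hg.maps x hx
          have := h0 (g x)
          simp only [Set.mem_iUnion, Set.mem_inter_iff, Set.mem_preimage, hx, hm, true_and,
            and_true]
          rw [← this]
          simp [hx]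
        · simp [hx, hl1]
      rw [this]
      refine Fs.iUnion fun j => hg.cpt _ ?_ (hFX j)
      exact ((hF j).inter hS).isCompact
  · by_cases hxG : x ∈ G
    · simp only [if_pos hxG]
      have := hrS (g x) (hg.maps x hxG)
      rw [← hg.iff x hxG]
      exact this
    · simp only [if_neg hxG]
      refine ⟨hl, ?_⟩
      have : x ∉ X := fun hxX => hxG (hS' ⟨hxX, hx⟩)
      tauto

theorem Rk.pull_total {X : Set Cantor} {n c : ℕ} (h : Rk X n c Set.univ) {f : Cantor → Cantor}
    (hf : Continuous f) (hfX : ∀ x, f x ∈ X ↔ x ∉ X) : Rk X n (c + 1) Set.univ := by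
  obtain ⟨r, hr, hrS⟩ := h
  refine ⟨fun x => r (f x), fun i => ?_, fun x _ => ⟨(hrS _ trivial).1, ?_⟩⟩
  · exact (hr i).preimage hf
  · have h1 := (hrS (f x) trivial).2
    have h2 := hfX x
    rw [← add_assoc, Nat.even_add_one, ← h1, h2, not_not]

end WadgeHom
namespace WadgeHom
open Filter Topology

theorem exists_open_of_cover (C : Set Cantor) (hC : IsClosed C) (hne : C.Nonempty)
    (F : ℕ → Set Cantor) (hF : ∀ n, IsClosed (F n)) (hcov : C ⊆ ⋃ n, F n) :
    ∃ n, ∃ U, IsOpen U ∧ (U ∩ C).Nonempty ∧ U ∩ C ⊆ F n := by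
  have : CompactSpace C := isCompact_iff_compactSpace.1 hC.isCompact
  have : Nonempty C := hne.to_subtype
  have hcov' : (⋃ n, ((↑) ⁻¹' (F n) : Set C)) = Set.univ := by
    ext x
    simp only [Set.mem_iUnion, Set.mem_preimage, Set.mem_univ, iff_true]
    simpa using hcov x.2
  obtain ⟨n, x, hx⟩ := nonempty_interior_of_iUnion_of_closed
    (fun n => (hF n).preimage continuous_subtype_val) hcov'
  obtain ⟨O, hO, hOi⟩ := isOpen_induced_iff.1 (isOpen_interior (s := ((↑) ⁻¹' (F n) : Set C)))
  refine ⟨n, O, hO, ⟨x, ?_, x.2⟩, ?_⟩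
  · rw [← hOi] at hx; exact hx
  · rintro y ⟨hy, hyC⟩
    have : (⟨y, hyC⟩ : C) ∈ interior ((↑) ⁻¹' (F n) : Set C) := by
      rw [← hOi]; exact hy
    have h3 : (⟨y, hyC⟩ : C) ∈ ((↑) ⁻¹' (F n) : Set C) := interior_subset this
    exact h3

theorem rank_drop (X : Set Cantor) (hX : X.Nonempty) (n c : ℕ) (h1 : Rk X (n + 1) c Set.univ)
    (h2 : Rk X (n + 1) (c + 1) Set.univ) :
    ∃ c' U, IsClopen U ∧ (X ∩ U).Nonempty ∧ Rk X n c' (U ∩ closure X) := by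
  obtain ⟨r, hr, hrS⟩ := h1
  obtain ⟨q, hq, hqS⟩ := h2
  have hFs : ∀ (r : Cantor → ℕ), (∀ i, Fs {x | r x ≤ i}) → Fs {x | r x < n} := by
    intro r hr
    rcases n with _ | n
    · have : {x | r x < 0} = ∅ := by ext x; simp
      rw [this]; exact Fs.of_closed isClosed_empty
    · have : {x | r x < n + 1} = {x | r x ≤ n} := by
        ext x; change r x < n + 1 ↔ r x ≤ n; omega
      rw [this]; exact hr n
  obtain ⟨F, hF, hFr⟩ := Fs.exists_closed (hFs r hr)
  obtain ⟨H, hH, hHr⟩ := Fs.exists_closed (hFs q hq)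
  have fin : ∀ (c' : ℕ) (r : Cantor → ℕ), (∀ i, Fs {x | r x ≤ i}) →
      (∀ x ∈ (Set.univ : Set Cantor), r x < n + 1 ∧ (x ∈ X ↔ Even (r x + c'))) →
      ∀ U, IsOpen U → (U ∩ closure X).Nonempty → U ∩ closure X ⊆ {x | r x < n} →
      ∃ c' U, IsClopen U ∧ (X ∩ U).Nonempty ∧ Rk X n c' (U ∩ closure X) := by
    intro c' r hr hrS U hU hne hsub
    obtain ⟨x, hxU, hxC⟩ := hne
    obtain ⟨y, hyU, hyX⟩ := mem_closure_iff.1 hxC U hU hxU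
    obtain ⟨V, hV, hyV, hVU⟩ := exists_clopen_nhd (hU.mem_nhds hyU)
    refine ⟨c', V, hV, ⟨y, hyX, hyV⟩, r, hr, fun z hz => ⟨?_, (hrS z trivial).2⟩⟩
    exact hsub ⟨hVU hz.1, hz.2⟩
  let FF : ℕ → Set Cantor := fun k => if Even k then F (k / 2) else H (k / 2)
  have hFF : ∀ k, IsClosed (FF k) := by
    intro k
    by_cases hk : Even k
    · simp only [FF, if_pos hk]; exact hF _
    · simp only [FF, if_neg hk]; exact hH _
  have hcov : closure X ⊆ ⋃ k, FF k := by
    intro x _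
    have h1 := hrS x trivial
    have h2 := hqS x trivial
    have h3 : r x < n ∨ q x < n := by
      by_contra h
      push Not at h
      have hrn : r x = n := by omega
      have hqn : q x = n := by omega
      rw [hrn] at h1
      rw [hqn, ← add_assoc, Nat.even_add_one] at h2
      tauto
    rcases h3 with h | h
    · have : x ∈ {x | r x < n} := h
      rw [hFr] at this
      obtain ⟨k, hk⟩ := Set.mem_iUnion.1 this
      refine Set.mem_iUnion.2 ⟨2 * k, ?_⟩
      simpa [FF] using hk
    · have : x ∈ {x | q x < n} := h
      rw [hHr] at this
      obtain ⟨k, hk⟩ := Set.mem_iUnion.1 this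
      refine Set.mem_iUnion.2 ⟨2 * k + 1, ?_⟩
      have h1 : ¬ Even (2 * k + 1) := by simp
      have h2 : (2 * k + 1) / 2 = k := by omega
      simp only [FF, if_neg h1, h2]
      exact hk
  obtain ⟨k, U, hU, hne, hsub⟩ :=
    exists_open_of_cover (closure X) isClosed_closure hX.closure FF hFF hcov
  by_cases hk : Even k
  · refine fin c r hr hrS U hU hne (hsub.trans ?_)
    simp only [FF, if_pos hk]
    rw [hFr]; exact Set.subset_iUnion F _
  · refine fin (c + 1) q hq hqS U hU hne (hsub.trans ?_)
    simp only [FF, if_neg hk]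
    rw [hHr]; exact Set.subset_iUnion H _

theorem PR.id_closed (X C : Set Cantor) (hC : IsClosed C) : PR X C id C where
  gd := isClosed_gdelta hC
  cont := continuousOn_id
  maps := fun _ hx => hx
  iff := fun _ _ => Iff.rfl
  cpt := fun _ hK _ => Fs.of_closed (hC.inter hK.isClosed)

theorem no_rank (X : Set Cantor) (hhom : IsHomogeneous X) (hnlc : ¬ LocallyCompactSpace X)
    (f : Cantor → Cantor) (hf : Continuous f) (hfX : ∀ x, f x ∈ X ↔ x ∉ X) :
    ∀ n c U, IsClopen U → (X ∩ U).Nonempty → ¬ Rk X n c (U ∩ closure X) := by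
  intro n
  induction n with
  | zero =>
    rintro c U hU ⟨u, huX, huU⟩ ⟨r, hr, hrS⟩
    exact absurd (hrS u ⟨huU, subset_closure huX⟩).1 (by omega)
  | succ n ih =>
    intro c U hU hne h
    have hn2 : Even c → 2 ≤ n + 1 := by
      intro hc
      by_contra hn
      have hn0 : n = 0 := by omega
      subst hn0
      obtain ⟨r, hr, hrS⟩ := h
      refine not_lc X hhom hnlc U hU.isOpen hne ?_
      intro x hx
      have := hrS x hx
      rw [this.2]
      have h0 : r x = 0 := by omega
      rw [h0]; simpa using hc
    have hCl : IsClosed (U ∩ closure X) := hU.isClosed.inter isClosed_closure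
    have hU1 : Rk X (n + 1) c U := h.pull hCl (by omega) hn2 (PR.id_closed X _ hCl)
      (fun x hx => ⟨hx.2, subset_closure hx.1⟩)
    obtain ⟨G, g, hXG, hg⟩ := exists_PR X hhom U hU hne
    have hU2 : Rk X (n + 1) c Set.univ := hU1.pull hU.isClosed (by omega) hn2 hg
      (fun x hx => hXG hx.1)
    obtain ⟨c', V, hV, hVne, hVr⟩ := rank_drop X (hne.mono Set.inter_subset_left) n c hU2
      (hU2.pull_total hf hfX)
    exact ih c' V hV hVne hVr

/-- Off the Gδ set `D`, `X` is of finite rank. -/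
def RD (X D : Set Cantor) : Prop :=
  ∃ (n : ℕ) (r : Cantor → ℕ), (∀ i, Fs {x | r x ≤ i}) ∧ (∀ x, x ∈ D ↔ n ≤ r x) ∧
    ∀ x, x ∉ D → (x ∈ X ↔ Even (r x))

theorem RD.univ (X : Set Cantor) : RD X Set.univ := by
  refine ⟨0, fun _ => 0, fun i => ?_, by simp, by simp⟩
  have : {x : Cantor | 0 ≤ i} = Set.univ := by ext; simp
  rw [this]
  exact Fs.of_closed isClosed_univ

theorem RD.gd {X D : Set Cantor} (h : RD X D) : IsGδ D := by
  obtain ⟨n, r, hr, hD, _⟩ := h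
  rcases n with _ | n
  · have : D = Set.univ := by ext x; simp [hD]
    rw [this]; exact IsGδ.univ
  · have : D = {x | r x ≤ n}ᶜ := by
      ext x
      change x ∈ D ↔ ¬ (r x ≤ n)
      rw [hD]; omega
    rw [this]; exact hr n

theorem RD.step {X D D' : Set Cantor} (h : RD X D) (hD' : IsGδ D') (hsub : D' ⊆ D) (b : Prop)
    (hb : ∀ x ∈ D, x ∉ D' → (x ∈ X ↔ b)) : RD X D' := by
  classical
  have hDgd := h.gd
  obtain ⟨n, r, hr, hD, hX⟩ := h
  obtain ⟨v, hv1, hv2, hvb⟩ : ∃ v, n ≤ v ∧ v < n + 2 ∧ (Even v ↔ b) := by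
    by_cases hbn : (Even n ↔ b)
    · exact ⟨n, le_rfl, by omega, hbn⟩
    · refine ⟨n + 1, by omega, by omega, ?_⟩
      rw [Nat.even_add_one]; tauto
  have hlt : ∀ x, x ∉ D → r x < n := by
    intro x hx; rw [hD] at hx; omega
  refine ⟨n + 2, fun x => if x ∈ D' then n + 2 else if x ∈ D then v else r x, fun i => ?_,
    fun x => ?_, fun x hx => ?_⟩
  · by_cases h1 : n + 2 ≤ i
    · convert Fs.of_closed isClosed_univ using 1
      ext x
      simp only [Set.mem_univ, iff_true]
      change (if x ∈ D' then n + 2 else if x ∈ D then v else r x) ≤ i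
      split_ifs with h2 h3
      · exact h1
      · omega
      · have := hlt x h3; omega
    · by_cases h2 : v ≤ i
      · have : {x | (if x ∈ D' then n + 2 else if x ∈ D then v else r x) ≤ i} = D'ᶜ := by
          ext x
          change (if x ∈ D' then n + 2 else if x ∈ D then v else r x) ≤ i ↔ x ∉ D'
          split_ifs with h3 h4
          · simp only [h3, not_true_eq_false, iff_false]; omega
          · simp [h3, h2]
          · have := hlt x h4
            simp only [h3, not_false_eq_true, iff_true]; omega
        rw [this]; unfold Fs; rw [compl_compl]; exact hD'
      · by_cases h5 : n ≤ i
        · have : {x | (if x ∈ D' then n + 2 else if x ∈ D then v else r x) ≤ i} = Dᶜ := by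
            ext x
            change (if x ∈ D' then n + 2 else if x ∈ D then v else r x) ≤ i ↔ x ∉ D
            split_ifs with h3 h4
            · simp only [hsub h3, not_true_eq_false, iff_false]; omega
            · simp [h4, h2]
            · have := hlt x h4
              simp only [h4, not_false_eq_true, iff_true]; omega
          rw [this]; unfold Fs; rw [compl_compl]; exact hDgd
        · convert hr i using 1
          ext x
          change (if x ∈ D' then n + 2 else if x ∈ D then v else r x) ≤ i ↔ r x ≤ i
          split_ifs with h3 h4
          · have := (hD x).1 (hsub h3); omega
          · have := (hD x).1 h4; omega
          · rfl
  · dsimp only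
    split_ifs with h3 h4
    · simp [h3]
    · simp only [h3, false_iff]; omega
    · have := hlt x h4
      simp only [h3, false_iff]; omega
  · simp only [if_neg hx]
    split_ifs with h4
    · rw [hb x h4 hx, hvb]
    · exact hX x h4

theorem no_RD (X : Set Cantor) (hhom : IsHomogeneous X) (hnlc : ¬ LocallyCompactSpace X)
    (f : Cantor → Cantor) (hf : Continuous f) (hfX : ∀ x, f x ∈ X ↔ x ∉ X)
    (D : Set Cantor) (hD : RD X D) : (X ∩ D).Nonempty := by
  by_contra hne
  rw [Set.not_nonempty_iff_eq_empty] at hne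
  have h0 : RD X ∅ := hD.step IsGδ.empty (Set.empty_subset _) False (fun x hx _ => by
    simp only [iff_false]
    intro hxX
    have : x ∈ X ∩ D := ⟨hxX, hx⟩
    rw [hne] at this
    exact this)
  have hXne : X.Nonempty := by
    rw [Set.nonempty_iff_ne_empty]
    rintro rfl
    exact hnlc inferInstance
  obtain ⟨n, r, hr, hn, hrX⟩ := h0
  refine no_rank X hhom hnlc f hf hfX n 0 Set.univ isClopen_univ (by simpa using hXne)
    ⟨r, hr, fun x _ => ⟨?_, ?_⟩⟩
  · have := hn x
    simp only [Set.mem_empty_iff_false, false_iff] at this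
    omega
  · simpa using hrX x (by simp)

end WadgeHom
namespace WadgeHom
open Filter Topology

open Classical in
/-- Sequence built by recursion on the whole history. -/
noncomputable def hseq {α : Type} (d : α) (P : ℕ → (ℕ → α) → α → Prop) (m : ℕ) : α :=
  if h : ∃ a, P m (fun j => if _ : j < m then hseq d P j else d) a then h.choose else d
termination_by m

theorem exists_hseq {α : Type} (d : α) (P : ℕ → (ℕ → α) → α → Prop)
    (hloc : ∀ m u u' a, (∀ j < m, u j = u' j) → P m u a → P m u' a)
    (hex : ∀ m u, (∀ j < m, P j u (u j)) → ∃ a, P m u a) : ∃ u, ∀ m, P m u (u m) := by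
  classical
  refine ⟨hseq d P, fun m => ?_⟩
  induction m using Nat.strong_induction_on with
  | _ m ih =>
    have h : ∃ a, P m (fun j => if _ : j < m then hseq d P j else d) a := by
      obtain ⟨a, ha⟩ := hex m (hseq d P) ih
      exact ⟨a, hloc m _ _ a (fun j hj => by simp [hj]) ha⟩
    have h2 : hseq d P m = h.choose := by
      rw [hseq, dif_pos h]
    rw [h2]
    exact hloc m _ _ _ (fun j hj => by simp [hj]) h.choose_spec

/-- The data fixed throughout the Martin-Monk style construction. -/
structure Data (X : Set Cantor) where
  f : Cantor → Cantor
  hf : Continuous f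
  hfX : ∀ x, f x ∈ X ↔ x ∉ X
  G : Set Cantor → Set Cantor
  g : Set Cantor → Cantor → Cantor
  hG : ∀ U, IsClopen U → (X ∩ U).Nonempty → X ⊆ G U ∧ PR X (G U) (g U) U
  O : Set Cantor → ℕ → Set Cantor
  hO : ∀ U, IsClopen U → (X ∩ U).Nonempty →
    (∀ i, IsOpen (O U i)) ∧ G U ∩ f ⁻¹' (G U) = ⋂ i, O U i

variable {X : Set Cantor}

/-- common domain of the two step maps -/
def Data.E (S : Data X) (U : Set Cantor) : Set Cantor := S.G U ∩ S.f ⁻¹' (S.G U)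

/-- step map -/
def Data.t (S : Data X) (b : Bool) (U : Set Cantor) (x : Cantor) : Cantor :=
  S.g U (if b = true then S.f x else x)

/-- words -/
def Data.T (S : Data X) (u : ℕ → Set Cantor) (z : Cantor) : ℕ → ℕ → Cantor → Cantor
  | _, 0, q => q
  | n, k + 1, q => S.t (z n) (u n) (S.T u z (n + 1) k q)

/-- points at which all words from level `m` of length at most `l` are defined -/
def Data.L (S : Data X) (u : ℕ → Set Cantor) (m l : ℕ) : Set Cantor :=
  {q | ∀ z n k, k < l → n + 1 + k = m → S.T u z (n + 1) k q ∈ S.E (u n)}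

theorem Data.T_congr (S : Data X) {u u' : ℕ → Set Cantor} {z z' : Cantor} (n k : ℕ) (q : Cantor)
    (h : ∀ j, n ≤ j → j < n + k → u j = u' j ∧ z j = z' j) : S.T u z n k q = S.T u' z' n k q := by
  induction k generalizing n with
  | zero => rfl
  | succ k ih =>
    simp only [Data.T]
    rw [ih (n + 1) (fun j h1 h2 => h j (by omega) (by omega)), (h n le_rfl (by omega)).1,
      (h n le_rfl (by omega)).2]

theorem Data.T_add (S : Data X) (u : ℕ → Set Cantor) (z : Cantor) (n k l : ℕ) (q : Cantor) :
    S.T u z n (k + l) q = S.T u z n k (S.T u z (n + k) l q) := by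
  induction k generalizing n with
  | zero => simp [Data.T]
  | succ k ih =>
    have : k + 1 + l = (k + l) + 1 := by omega
    rw [this]
    simp only [Data.T]
    rw [ih (n + 1)]
    have : n + 1 + k = n + (k + 1) := by omega
    rw [this]

theorem Data.t_cont (S : Data X) (b : Bool) {U : Set Cantor} (hU : IsClopen U)
    (hne : (X ∩ U).Nonempty) : ContinuousOn (S.t b U) (S.E U) := by
  have h := (S.hG U hU hne).2
  cases b with
  | false =>
    have : S.t false U = S.g U := by funext x; simp [Data.t]
    rw [this]
    exact h.cont.mono Set.inter_subset_left
  | true =>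
    have : S.t true U = S.g U ∘ S.f := by funext x; simp [Data.t]
    rw [this]
    exact h.cont.comp S.hf.continuousOn (fun x hx => hx.2)

theorem Data.t_maps (S : Data X) (b : Bool) {U : Set Cantor} (hU : IsClopen U)
    (hne : (X ∩ U).Nonempty) {x : Cantor} (hx : x ∈ S.E U) : S.t b U x ∈ U := by
  have h := (S.hG U hU hne).2
  cases b with
  | false => simpa [Data.t] using h.maps x hx.1
  | true => simpa [Data.t] using h.maps (S.f x) hx.2

theorem Data.t_iff (S : Data X) (b : Bool) {U : Set Cantor} (hU : IsClopen U)
    (hne : (X ∩ U).Nonempty) {x : Cantor} (hx : x ∈ S.E U) :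
    S.t b U x ∈ X ↔ (x ∈ X ↔ b = false) := by
  have h := (S.hG U hU hne).2
  cases b with
  | false => simpa [Data.t] using h.iff x hx.1
  | true =>
    have h1 := h.iff (S.f x) hx.2
    have h2 := S.hfX x
    simp only [Data.t, if_true]
    simp only [h1, h2]
    simp

/-- the history so far consists of clopen sets meeting `X` -/
def OK (X : Set Cantor) (u : ℕ → Set Cantor) (m : ℕ) : Prop :=
  ∀ j < m, IsClopen (u j) ∧ (X ∩ u j).Nonempty

theorem Data.L_anti (S : Data X) (u : ℕ → Set Cantor) (m : ℕ) {l l' : ℕ} (h : l ≤ l') :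
    S.L u m l' ⊆ S.L u m l := fun _ hq z n k hk hn => hq z n k (by omega) hn

theorem Data.T_cont (S : Data X) (u : ℕ → Set Cantor) (m : ℕ) (hu : OK X u m) (z : Cantor)
    (k : ℕ) : ∀ n, n + k = m → ContinuousOn (S.T u z n k) (S.L u m k) := by
  induction k with
  | zero => intro n _; exact continuousOn_id
  | succ k ih =>
    intro n hn
    have h1 := ih (n + 1) (by omega)
    have h2 := S.t_cont (z n) (hu n (by omega)).1 (hu n (by omega)).2
    exact h2.comp (h1.mono (S.L_anti u m (by omega)))
      (fun q hq => hq z n k (by omega) (by omega))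

theorem Data.T_iff (S : Data X) (u : ℕ → Set Cantor) (m : ℕ) (hu : OK X u m) (z : Cantor)
    (k : ℕ) : ∀ n, n + k = m → ∃ b : Prop, ∀ q ∈ S.L u m k, (S.T u z n k q ∈ X ↔ (q ∈ X ↔ b)) := by
  induction k with
  | zero => intro n _; exact ⟨True, fun q _ => by simp [Data.T]⟩
  | succ k ih =>
    intro n hn
    obtain ⟨b, hb⟩ := ih (n + 1) (by omega)
    refine ⟨(b ↔ z n = false), fun q hq => ?_⟩
    have h1 := hb q (S.L_anti u m (by omega) hq)
    have h2 := S.t_iff (z n) (hu n (by omega)).1 (hu n (by omega)).2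
      (hq z n k (by omega) (by omega))
    simp only [Data.T]
    rw [h2, h1]
    tauto

/-- finite set of representatives of patterns of length `m` -/
noncomputable def Z (m : ℕ) : Finset Cantor :=
  open Classical in
  Finset.univ.image (fun s : Fin m → Bool => fun j => if h : j < m then s ⟨j, h⟩ else false)

theorem exists_Z (m : ℕ) (z : Cantor) : ∃ z' ∈ Z m, ∀ j < m, z' j = z j := by
  classical
  refine ⟨fun j => if j < m then z j else false, ?_, fun j hj => by simp [hj]⟩
  unfold Z
  refine Finset.mem_image.2 ⟨fun i => z i, Finset.mem_univ _, ?_⟩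
  funext j
  by_cases h : j < m <;> simp [h]

theorem Data.RD_step (S : Data X) (u : ℕ → Set Cantor) (m : ℕ) (hu : OK X u m) (z : Cantor)
    (n k : ℕ) (hn : n + 1 + k = m) (D : Set Cantor) (hD : RD X D) (hDL : D ⊆ S.L u m k) :
    RD X (D ∩ S.T u z (n + 1) k ⁻¹' S.E (u n)) := by
  have hc : ContinuousOn (S.T u z (n + 1) k) D := (S.T_cont u m hu z k (n + 1) hn).mono hDL
  obtain ⟨b, hb⟩ := S.T_iff u m hu z k (n + 1) hn
  have hun := hu n (by omega)
  obtain ⟨hXG, hPR⟩ := S.hG (u n) hun.1 hun.2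
  have hD1 : RD X (D ∩ S.T u z (n + 1) k ⁻¹' S.G (u n)) := by
    refine hD.step (gdelta_inter_preimage hD.gd hc hPR.gd) Set.inter_subset_left (¬ b) ?_
    intro q hq hq'
    have h1 : S.T u z (n + 1) k q ∉ X := fun h => hq' ⟨hq, hXG h⟩
    have h2 := hb q (hDL hq)
    tauto
  have h3 : D ∩ S.T u z (n + 1) k ⁻¹' S.E (u n) = (D ∩ S.T u z (n + 1) k ⁻¹' S.G (u n)) ∩
      S.T u z (n + 1) k ⁻¹' (S.f ⁻¹' S.G (u n)) := by
    ext q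
    simp only [Data.E, Set.mem_inter_iff, Set.mem_preimage]
    tauto
  rw [h3]
  refine hD1.step (gdelta_inter_preimage hD1.gd (hc.mono Set.inter_subset_left)
    (hPR.gd.preimage S.hf)) Set.inter_subset_left b ?_
  intro q hq hq'
  have h1 : S.f (S.T u z (n + 1) k q) ∉ X := fun h => hq' ⟨hq, hXG h⟩
  have h2 := hb q (hDL hq.1)
  have h4 := S.hfX (S.T u z (n + 1) k q)
  tauto

theorem Data.RD_L (S : Data X) (u : ℕ → Set Cantor) (m : ℕ) (hu : OK X u m) (l : ℕ) :
    RD X (S.L u m l) := by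
  classical
  induction l with
  | zero =>
    have : S.L u m 0 = Set.univ := by
      ext q
      simp only [Set.mem_univ, iff_true]
      intro z n k hk
      omega
    rw [this]; exact RD.univ X
  | succ l ih =>
    by_cases hl : l + 1 ≤ m
    · obtain ⟨n, hn⟩ : ∃ n, n + 1 + l = m := ⟨m - 1 - l, by omega⟩
      have key : ∀ Q : Finset Cantor,
          RD X (S.L u m l ∩ {q | ∀ z ∈ Q, S.T u z (n + 1) l q ∈ S.E (u n)}) := by
        intro Q
        induction Q using Finset.induction_on with
        | empty =>
          convert ih using 1
          ext q
          constructor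
          · exact fun h => h.1
          · exact fun h => ⟨h, fun z hz => absurd hz (Finset.notMem_empty z)⟩
        | insert z Q _ ihQ =>
          have := S.RD_step u m hu z n l hn _ ihQ Set.inter_subset_left
          convert this using 1
          ext q
          constructor
          · rintro ⟨h1, h2⟩
            exact ⟨⟨h1, fun w hw => h2 w (Finset.mem_insert_of_mem hw)⟩,
              h2 z (Finset.mem_insert_self z Q)⟩
          · rintro ⟨⟨h1, h2⟩, h3⟩
            refine ⟨h1, fun w hw => ?_⟩
            rcases Finset.mem_insert.1 hw with rfl | hw
            · exact h3
            · exact h2 w hw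
      convert key (Z m) using 1
      ext q
      constructor
      · intro hq
        exact ⟨S.L_anti u m (by omega) hq, fun z _ => hq z n l (by omega) hn⟩
      · rintro ⟨h1, h2⟩ z n' k hk hn'
        by_cases hkl : k < l
        · exact h1 z n' k hkl hn'
        · have hk' : k = l := by omega
          subst hk'
          have : n' = n := by omega
          subst this
          obtain ⟨z', hz', hzz⟩ := exists_Z m z
          have h3 := h2 z' hz'
          rw [S.T_congr (u' := u) (z' := z) (n' + 1) k q
            (fun j _ hj => ⟨rfl, hzz j (by omega)⟩)] at h3
          exact h3
    · convert ih using 1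
      apply Set.Subset.antisymm (S.L_anti u m (by omega))
      intro q hq z n k hk hn
      exact hq z n k (by omega) hn

/-- requirement on the choice at stage `m` -/
def Data.P (S : Data X) (m : ℕ) (u : ℕ → Set Cantor) (a : Set Cantor) : Prop :=
  IsClopen a ∧ (X ∩ a).Nonempty ∧ ∃ p ∈ a, p ∈ S.L u m m ∧ ∀ z n k, n + k = m →
    ∃ N, IsClosed N ∧ (∀ q ∈ a, q ∈ S.L u m m → S.T u z n k q ∈ N) ∧
      (∀ y ∈ N, ∀ i < m, y i = S.T u z n k p i) ∧
      ∀ n', n = n' + 1 → ∀ i ≤ m, N ⊆ S.O (u n') i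

theorem Data.L_congr (S : Data X) {u u' : ℕ → Set Cantor} (m : ℕ) (h : ∀ j < m, u j = u' j) :
    S.L u m m ⊆ S.L u' m m := by
  intro q hq z n k hk hn
  have := hq z n k hk hn
  rw [S.T_congr (u' := u') (z' := z) (n + 1) k q (fun j _ hj => ⟨h j (by omega), rfl⟩),
    h n (by omega)] at this
  exact this

theorem Data.P_congr (S : Data X) (m : ℕ) (u u' : ℕ → Set Cantor) (a : Set Cantor)
    (h : ∀ j < m, u j = u' j) (hP : S.P m u a) : S.P m u' a := by
  obtain ⟨h1, h2, p, hp, hpL, h3⟩ := hP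
  refine ⟨h1, h2, p, hp, S.L_congr m h hpL, fun z n k hn => ?_⟩
  obtain ⟨N, hN, hN1, hN2, hN3⟩ := h3 z n k hn
  have hT : ∀ q, S.T u z n k q = S.T u' z n k q := fun q =>
    S.T_congr n k q (fun j _ hj => ⟨h j (by omega), rfl⟩)
  refine ⟨N, hN, fun q hq hqL => ?_, fun y hy i hi => ?_, fun n' hn' i hi => ?_⟩
  · rw [← hT]
    exact hN1 q hq (S.L_congr m (fun j hj => (h j hj).symm) hqL)
  · rw [← hT]; exact hN2 y hy i hi
  · rw [← h n' (by omega)]; exact hN3 n' hn' i hi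

theorem Data.P_exists (S : Data X) (hhom : IsHomogeneous X) (hnlc : ¬ LocallyCompactSpace X)
    (m : ℕ) (u : ℕ → Set Cantor) (hu : OK X u m) : ∃ a, S.P m u a := by
  obtain ⟨p, hpX, hpL⟩ := no_RD X hhom hnlc S.f S.hf S.hfX _ (S.RD_L u m hu m)
  have h1 : ∀ z n k, n + k = m → ∃ N, IsClopen N ∧ S.T u z n k p ∈ N ∧
      (∀ y ∈ N, ∀ i < m, y i = S.T u z n k p i) ∧
      ∀ n', n = n' + 1 → ∀ i ≤ m, N ⊆ S.O (u n') i := by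
    intro z n k hn
    have hcyl : PiNat.cylinder (S.T u z n k p) m ∈ 𝓝 (S.T u z n k p) :=
      (PiNat.isOpen_cylinder _ _ _).mem_nhds (PiNat.self_mem_cylinder _ _)
    rcases n with _ | n'
    · obtain ⟨N, hN, hpN, hsub⟩ := exists_clopen_nhd hcyl
      refine ⟨N, hN, hpN, fun y hy i hi => ?_, fun n' hn' => by omega⟩
      exact PiNat.mem_cylinder_iff.1 (hsub hy) i hi
    · have hun := hu n' (by omega)
      obtain ⟨hOo, hOE⟩ := S.hO (u n') hun.1 hun.2
      have hE : S.T u z (n' + 1) k p ∈ S.E (u n') := hpL z n' k (by omega) hn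
      have hE2 : ∀ i, S.T u z (n' + 1) k p ∈ S.O (u n') i := by
        have : S.T u z (n' + 1) k p ∈ S.G (u n') ∩ S.f ⁻¹' S.G (u n') := hE
        rw [hOE] at this
        exact Set.mem_iInter.1 this
      have hOn : (⋂ i ∈ Finset.range (m + 1), S.O (u n') i) ∈ 𝓝 (S.T u z (n' + 1) k p) := by
        rw [Filter.biInter_finset_mem]
        exact fun i _ => (hOo i).mem_nhds (hE2 i)
      obtain ⟨N, hN, hpN, hsub⟩ := exists_clopen_nhd (Filter.inter_mem hcyl hOn)
      refine ⟨N, hN, hpN, fun y hy i hi => PiNat.mem_cylinder_iff.1 (hsub hy).1 i hi, ?_⟩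
      intro nn2 hnn2 i hi y hy
      have : nn2 = n' := by omega
      subst this
      have := (hsub hy).2
      simp only [Set.mem_iInter] at this
      exact this i (Finset.mem_range.2 (by omega))
  choose! N hN hpN hN1 hN2 using h1
  have h2 : ∀ z ∈ Z m, ∀ n ∈ Finset.range (m + 1), ∀ᶠ q in 𝓝[S.L u m m] p,
      S.T u z n (m - n) q ∈ N z n (m - n) := by
    intro z _ n hn
    have hnm : n + (m - n) = m := by have := Finset.mem_range.1 hn; omega
    have hc := (S.T_cont u m hu z (m - n) n hnm).mono (S.L_anti u m (by omega : m - n ≤ m))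
    exact (hc p hpL).eventually ((hN z n (m - n) hnm).isOpen.mem_nhds (hpN z n (m - n) hnm))
  have h3 : ∀ᶠ q in 𝓝[S.L u m m] p, ∀ z ∈ Z m, ∀ n ∈ Finset.range (m + 1),
      S.T u z n (m - n) q ∈ N z n (m - n) := by
    rw [Filter.eventually_all_finset]
    intro z hz
    rw [Filter.eventually_all_finset]
    exact fun n hn => h2 z hz n hn
  rw [eventually_nhdsWithin_iff] at h3
  obtain ⟨a, ha, hpa, hsub⟩ := exists_clopen_nhd h3
  refine ⟨a, ha, ⟨p, hpX, hpa⟩, p, hpa, hpL, fun z n k hn => ?_⟩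
  obtain ⟨z', hz', hzz⟩ := exists_Z m z
  have hT : ∀ q, S.T u z' n k q = S.T u z n k q := fun q =>
    S.T_congr n k q (fun j _ hj => ⟨rfl, hzz j (by omega)⟩)
  refine ⟨N z' n k, (hN z' n k hn).isClosed, fun q hq hqL => ?_, fun y hy i hi => ?_,
    hN2 z' n k hn⟩
  · have hk : k = m - n := by omega
    rw [← hT, hk]
    exact hsub hq hqL z' hz' n (Finset.mem_range.2 (by omega))
  · rw [← hT]; exact hN1 z' n k hn y hy i hi

theorem Data.contra (S : Data X) (hhom : IsHomogeneous X) (hnlc : ¬ LocallyCompactSpace X)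
    (hB : @MeasurableSet Cantor (borel Cantor) X) : False := by
  obtain ⟨u, hu⟩ := exists_hseq Set.univ S.P S.P_congr (fun m u h =>
    S.P_exists hhom hnlc m u (fun j hj => ⟨(h j hj).1, (h j hj).2.1⟩))
  have hcl : ∀ m, IsClopen (u m) := fun m => (hu m).1
  have hne : ∀ m, (X ∩ u m).Nonempty := fun m => (hu m).2.1
  have h3 := fun m => (hu m).2.2
  choose p hpu hpL hN using h3
  -- membership of deeper words
  have hmem : ∀ z m l, S.T u z m l (p (m + l)) ∈ u m := by
    intro z m l
    rcases l with _ | l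
    · exact hpu m
    · refine S.t_maps _ (hcl m) (hne m) ?_
      exact hpL (m + (l + 1)) z m l (by omega) (by omega)
  have hgood : ∀ z m l, S.T u z m l (p (m + l)) ∈ S.L u m m := by
    intro z m l z' n k hk hn
    let zz2 : Cantor := fun j => if j < m then z' j else z j
    have h1 := hpL (m + l) zz2 n (k + l) (by omega) (by omega)
    rw [S.T_add, hn, S.T_congr (u' := u) (z' := z) m l _ (fun j hj _ => ⟨rfl, ?_⟩),
      S.T_congr (u' := u) (z' := z') (n + 1) k _ (fun j _ hj => ⟨rfl, ?_⟩)] at h1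
    · exact h1
    · have : j < m := by omega
      simp [zz2, this]
    · have : ¬ j < m := by omega
      simp [zz2, this]
  let A : Cantor → ℕ → ℕ → Cantor := fun z n k => S.T u z n k (p (n + k))
  have hAN : ∀ z n k, ∃ N, IsClosed N ∧ (∀ k', k ≤ k' → A z n k' ∈ N) ∧
      (∀ y ∈ N, ∀ i < n + k, y i = A z n k i) ∧
      ∀ n', n = n' + 1 → ∀ i ≤ n + k, N ⊆ S.O (u n') i := by
    intro z n k
    obtain ⟨N, hN1, hN2, hN3, hN4⟩ := hN (n + k) z n k rfl
    refine ⟨N, hN1, fun k' hk' => ?_, hN3, hN4⟩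
    obtain ⟨l, rfl⟩ := Nat.exists_eq_add_of_le hk'
    change S.T u z n (k + l) (p (n + (k + l))) ∈ N
    rw [S.T_add, ← add_assoc]
    exact hN2 _ (hmem z (n + k) l) (hgood z (n + k) l)
  let x : Cantor → ℕ → Cantor := fun z n i => A z n (i + 1) i
  have hlim : ∀ z n, Tendsto (A z n) atTop (𝓝 (x z n)) := by
    intro z n
    rw [tendsto_pi_nhds]
    intro i
    apply tendsto_nhds_of_eventually_eq
    filter_upwards [eventually_ge_atTop (i + 1)] with k hk
    obtain ⟨N, hN1, hN2, hN3, hN4⟩ := hAN z n (i + 1)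
    exact hN3 _ (hN2 k hk) i (by omega)
  have hxE : ∀ z n, x z (n + 1) ∈ S.E (u n) := by
    intro z n
    change x z (n + 1) ∈ S.G (u n) ∩ S.f ⁻¹' S.G (u n)
    rw [(S.hO (u n) (hcl n) (hne n)).2]
    refine Set.mem_iInter.2 fun i => ?_
    obtain ⟨N, hN1, hN2, hN3, hN4⟩ := hAN z (n + 1) i
    refine hN4 n rfl i (by omega) ?_
    exact hN1.mem_of_tendsto (hlim z (n + 1)) ((eventually_ge_atTop i).mono fun k hk => hN2 k hk)
  have hrel : ∀ z n, x z n = S.t (z n) (u n) (x z (n + 1)) := by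
    intro z n
    have h1 : Tendsto (fun k => A z n (k + 1)) atTop (𝓝 (x z n)) :=
      (hlim z n).comp (tendsto_add_atTop_nat 1)
    have h2 : ∀ k, A z n (k + 1) = S.t (z n) (u n) (A z (n + 1) k) := by
      intro k
      have : n + (k + 1) = n + 1 + k := by omega
      simp only [A, Data.T, this]
    have h3 : Tendsto (fun k => A z (n + 1) k) atTop (𝓝[S.E (u n)] (x z (n + 1))) := by
      refine tendsto_nhdsWithin_iff.2 ⟨hlim z (n + 1), Eventually.of_forall fun k => ?_⟩
      exact hpL (n + 1 + k) z n k (by omega) rfl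
    have h4 := (S.t_cont (z n) (hcl n) (hne n) _ (hxE z n)).tendsto.comp h3
    refine tendsto_nhds_unique h1 ?_
    simp only [h2]
    exact h4
  have hloc : ∀ z z' n, (∀ j, n ≤ j → z j = z' j) → x z n = x z' n := by
    intro z z' n h
    funext i
    change S.T u z n (i + 1) _ i = S.T u z' n (i + 1) _ i
    rw [S.T_congr (u' := u) (z' := z') n (i + 1) _ (fun j hj _ => ⟨rfl, h j hj⟩)]
  have hcont : Continuous (fun z => x z 0) := by
    refine continuous_pi fun i => ?_
    rw [continuous_iff_continuousAt]
    intro z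
    apply tendsto_nhds_of_eventually_eq
    filter_upwards [(PiNat.isOpen_cylinder (fun _ : ℕ => Bool) z (i + 1)).mem_nhds
      (PiNat.self_mem_cylinder _ _)] with z' hz'
    change S.T u z' 0 (i + 1) _ i = S.T u z 0 (i + 1) _ i
    rw [S.T_congr (u' := u) (z' := z) 0 (i + 1) _
      (fun j _ hj => ⟨rfl, PiNat.mem_cylinder_iff.1 hz' j (by omega)⟩)]
  have hiff : ∀ z n, (x z n ∈ X ↔ (x z (n + 1) ∈ X ↔ z n = false)) := by
    intro z n
    have := S.t_iff (z n) (hcl n) (hne n) (hxE z n)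
    rw [← hrel] at this
    exact this
  have hflip : ∀ (z : Cantor) (n d j : ℕ), j + d = n →
      (x (Function.update z n (!(z n))) j ∈ X ↔ x z j ∉ X) := by
    intro z n d
    induction d with
    | zero =>
      intro j hj
      have hj' : j = n := by omega
      subst hj'
      have h1 := hiff z j
      have h2 := hiff (Function.update z j (!(z j))) j
      rw [hloc (Function.update z j (!(z j))) z (j + 1) (fun i hi => by
        rw [Function.update_of_ne (by omega)])] at h2
      rw [Function.update_self] at h2
      rw [h1, h2]
      cases z j <;> simp
    | succ d ih =>
      intro j hj
      have h0 := ih (j + 1) (by omega)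
      have h1 := hiff z j
      have h2 := hiff (Function.update z n (!(z n))) j
      rw [Function.update_of_ne (by omega)] at h2
      rw [h1, h2, h0]
      tauto
  refine no_flip ((fun z => x z 0) ⁻¹' X) ?_ (fun z n => hflip z n n 0 (by omega))
  exact hcont.borel_measurable hB

end WadgeHom

/-- The Wadge class of a homogeneous non-locally-compact Borel subspace of Cantor
space is non-self-dual: the complement of X is not Wadge reducible to X. -/
theorem homogeneous_borel_nonselfdual (X : Set Cantor)
    (hB : @MeasurableSet Cantor (borel Cantor) X)
    (hhom : IsHomogeneous X) (hnlc : ¬ LocallyCompactSpace X) :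
    ¬ WadgeLe Xᶜ X := by
  rintro ⟨f, hf, hfX⟩
  have hfX2 : ∀ x, f x ∈ X ↔ x ∉ X := fun x => (Set.ext_iff.1 hfX x).symm
  classical
  have h1 : ∀ U : Set Cantor, ∃ (G : Set Cantor) (g : Cantor → Cantor),
      IsClopen U → (X ∩ U).Nonempty → X ⊆ G ∧ WadgeHom.PR X G g U := by
    intro U
    by_cases h : IsClopen U ∧ (X ∩ U).Nonempty
    · obtain ⟨G, g, hG⟩ := WadgeHom.exists_PR X hhom U h.1 h.2
      exact ⟨G, g, fun _ _ => hG⟩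
    · exact ⟨∅, id, fun a b => absurd ⟨a, b⟩ h⟩
  choose G g hG using h1
  have h2 : ∀ U : Set Cantor, ∃ O : ℕ → Set Cantor, IsClopen U → (X ∩ U).Nonempty →
      (∀ i, IsOpen (O i)) ∧ G U ∩ f ⁻¹' (G U) = ⋂ i, O i := by
    intro U
    by_cases h : IsClopen U ∧ (X ∩ U).Nonempty
    · have h3 := (hG U h.1 h.2).2.gd
      obtain ⟨O, hO, hE⟩ := isGδ_iff_eq_iInter_nat.1 (h3.inter (h3.preimage hf))
      exact ⟨O, fun _ _ => ⟨hO, hE⟩⟩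
    · exact ⟨fun _ => ∅, fun a b => absurd ⟨a, b⟩ h⟩
  choose O hO using h2
  exact WadgeHom.Data.contra ⟨f, hf, hfX2, G, g, hG, O, hO⟩ hhom hnlc hB
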